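/- Let a = (1/2)√(3/π) and α ∈ ℝ \ {0}. For ω ∈ H¹(S²) with ⟨ω, Y₀⁰⟩ = 0 and ⟨ω, Y₁^m⟩ = 0 for m = ±1, define Lω = aα(1 + 2Δ⁻¹)∂_φω, where Δ⁻¹ inverts the Laplace–Beltrami operator on mean-zero functions. Then ‖∂_φω‖_{L²(S²)} ≤ (3/(2a|α|))·‖Lω‖_{L²(S²)}. -/

import Mathlib

open MeasureTheory
open scoped ENNReal

noncomputable section

/-- Functions on the unit sphere, represented in colatitude-longitude coordinates `(θ, φ)`. -/
abbrev SphereFun : Type := ℝ → ℝ → ℝ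

/-- The `L²` inner product on the sphere:
`⟨u,v⟩ = ∫₀^{2π} ∫₀^π u v sin θ dθ dφ`. -/
def sInner (u v : SphereFun) : ℝ :=
  ∫ φ in (0:ℝ)..(2*Real.pi), ∫ θ in (0:ℝ)..Real.pi, u θ φ * v θ φ * Real.sin θ

/-- Legendre polynomials via Rodrigues' formula. -/
def legP (n : ℕ) (s : ℝ) : ℝ :=
  (1 / ((2:ℝ)^n * (Nat.factorial n : ℝ))) * iteratedDeriv n (fun x : ℝ => (x^2 - 1)^n) s

/-- Associated Legendre functions `P_n^m`. -/
def assocLegP (n m : ℕ) (s : ℝ) : ℝ :=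
  (-1 : ℝ)^m * (1 - s^2) ^ ((m : ℝ)/2) * iteratedDeriv m (legP n) s

/-- Real spherical harmonics `Y_n^m`. -/
def Ynm (n : ℕ) (m : ℤ) : SphereFun := fun θ φ =>
  if m = 0 then
    Real.sqrt ((2*(n:ℝ)+1)/(4*Real.pi)) * legP n (Real.cos θ)
  else if 0 < m then
    (-1 : ℝ)^(m.natAbs) * Real.sqrt 2 *
      Real.sqrt ((2*(n:ℝ)+1)/(4*Real.pi) *
        ((Nat.factorial (n - m.natAbs) : ℝ) / (Nat.factorial (n + m.natAbs) : ℝ))) *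
      assocLegP n m.natAbs (Real.cos θ) * Real.cos ((m.natAbs : ℝ) * φ)
  else
    (-1 : ℝ)^(m.natAbs) * Real.sqrt 2 *
      Real.sqrt ((2*(n:ℝ)+1)/(4*Real.pi) *
        ((Nat.factorial (n - m.natAbs) : ℝ) / (Nat.factorial (n + m.natAbs) : ℝ))) *
      assocLegP n m.natAbs (Real.cos θ) * Real.sin ((m.natAbs : ℝ) * φ)

/-- The spherical-harmonic coefficient `u_n^m = ⟨u, Y_n^m⟩`. -/
def coeff (u : SphereFun) (n : ℕ) (m : ℤ) : ℝ := sInner u (Ynm n m)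

/-- `μ_n = n(n+1) + 1`. -/
def muSp (n : ℕ) : ℝ := (n:ℝ)*((n:ℝ)+1)+1

/-- Squared (inhomogeneous) Sobolev norm `‖u‖²_{H^k} = Σ μ_n^k |u_n^m|²`. -/
def sobNormSq (k : ℕ) (u : SphereFun) : ℝ≥0∞ :=
  ∑' p : ℕ × ℤ, if |p.2| ≤ (p.1 : ℤ) then
    ENNReal.ofReal ((muSp p.1)^k * (coeff u p.1 p.2)^2) else 0

/-- Squared homogeneous Sobolev norm `‖u‖²_{Ḣ^k} = Σ_{n ≥ 1} λ_n^k |u_n^m|²`. -/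
def dotNormSq (k : ℕ) (u : SphereFun) : ℝ≥0∞ :=
  ∑' p : ℕ × ℤ, if 1 ≤ p.1 ∧ |p.2| ≤ (p.1 : ℤ) then
    ENNReal.ofReal (((p.1:ℝ)*((p.1:ℝ)+1))^k * (coeff u p.1 p.2)^2) else 0

/-- Squared Gevrey norm `‖u‖²_{G_λ} = Σ_{n ≥ 1} μ_n² e^{2λ√μ_n} |u_n^m|²`. -/
def gevNormSq (lam : ℝ) (u : SphereFun) : ℝ≥0∞ :=
  ∑' p : ℕ × ℤ, if 1 ≤ p.1 ∧ |p.2| ≤ (p.1 : ℤ) then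
    ENNReal.ofReal ((muSp p.1)^2 * Real.exp (2*lam*Real.sqrt (muSp p.1)) *
      (coeff u p.1 p.2)^2) else 0

/-- `∂_θ`. -/
def dTheta (u : SphereFun) : SphereFun := fun θ φ => deriv (fun t => u t φ) θ

/-- `∂_φ`. -/
def dPhi (u : SphereFun) : SphereFun := fun θ φ => deriv (fun p => u θ p) φ

/-- The Laplace–Beltrami operator in colatitude-longitude coordinates:
`Δu = (1/sinθ)∂_θ(sinθ ∂_θu) + (1/sin²θ)∂²_φu`. -/
def lapS (u : SphereFun) : SphereFun := fun θ φ =>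
  (1 / Real.sin θ) * deriv (fun t => Real.sin t * dTheta u t φ) θ
  + (1 / (Real.sin θ)^2) * dPhi (dPhi u) θ φ

/-- A zonal function: one depending only on the colatitude `θ`. -/
def Zonal (u : SphereFun) : Prop := ∀ (θ φ₁ φ₂ : ℝ), u θ φ₁ = u θ φ₂

/-- Zonal on the coordinate chart `θ ∈ [0, π]`. -/
def ZonalOn (u : SphereFun) : Prop :=
  ∀ θ ∈ Set.Icc (0:ℝ) Real.pi, ∀ (φ₁ φ₂ : ℝ), u θ φ₁ = u θ φ₂

/-- `2π`-periodicity in the longitude. -/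
def PeriodicPhi (u : SphereFun) : Prop := ∀ θ φ, u θ (φ + 2*Real.pi) = u θ φ

/-- The advection term `U·∇f` for the velocity `U = ∇⊥Ψ`, i.e.
`(1/sinθ)∂_φΨ ∂_θf − ∂_θΨ (1/sinθ)∂_φf`. -/
def advect (Ψ f : SphereFun) : SphereFun := fun θ φ =>
  (1 / Real.sin θ) * dPhi Ψ θ φ * dTheta f θ φ
  - dTheta Ψ θ φ * ((1 / Real.sin θ) * dPhi f θ φ)

/-- Smoothness in the coordinates. -/
def SphSmooth (u : SphereFun) : Prop := ContDiff ℝ (⊤ : ℕ∞) (Function.uncurry u)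

/-- A function is trivial if it is a zonal function plus an element of
`span{Y₂^m : |m| ≤ 2}`; non-triviality is the negation of this. -/
def SphNontrivial (u : SphereFun) : Prop :=
  ¬ ∃ (z : SphereFun) (c : ℤ → ℝ), Zonal z ∧
      ∀ θ ∈ Set.Icc (0:ℝ) Real.pi, ∀ φ : ℝ,
        u θ φ = z θ φ + ∑ m ∈ Finset.Icc (-2 : ℤ) 2, c m * Ynm 2 m θ φ

/-- Real analyticity on the sphere, characterized by membership in a Gevrey class. -/
def RealAnalyticSphere (u : SphereFun) : Prop := ∃ lam > 0, gevNormSq lam u < ⊤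

/-- The `L²` norm. -/
def l2Norm (u : SphereFun) : ℝ := Real.sqrt (sInner u u)

/-- The inverse Laplace–Beltrami operator `Δ⁻¹` on mean-zero functions, defined
through the spherical harmonics expansion. -/
def invLap (u : SphereFun) : SphereFun := fun θ φ =>
  ∑' p : ℕ × ℤ, if 1 ≤ p.1 ∧ |p.2| ≤ (p.1 : ℤ) then
    (-(1:ℝ)/((p.1:ℝ)*((p.1:ℝ)+1))) * coeff u p.1 p.2 * Ynm p.1 p.2 θ φ else 0

/-! On spherical harmonics of degree `n` the operator `1 + 2Δ⁻¹` is multiplication by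
`1 - 2/(n(n+1))`, which vanishes for `n = 1` and is at least `2/3` for `n ≥ 2`. Since `∂_φ` is
skew-adjoint and maps `Y_n^m` to `-m Y_n^{-m}`, the function `∂_φ ω` inherits orthogonality to
`Y_1^{±1}` from `ω`, and it is orthogonal to `Y_1^0` in any case, so the degree with zero multiplier
is absent. The series for `Δ⁻¹` vanishes on the orthogonal complement of the harmonics, where
`1 + 2Δ⁻¹` is the identity, so the bound holds without knowing that the harmonics are complete.

Orthonormality of the harmonics is the one computation. In the longitude it follows from two
integrations by parts over the period; in the colatitude, `m` integrations by parts turn the pairing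
of associated Legendre functions into that of a Legendre polynomial with a polynomial of degree at
most `n`, for which Rodrigues' formula only sees the leading coefficient. -/

section DiagonalPerturbation

open Filter

variable {𝕜 E ι : Type*} [RCLike 𝕜] [NormedAddCommGroup E] [InnerProductSpace 𝕜 E]

lemma norm_add_sum_smul_sq {e : ι → E} (he : Orthonormal 𝕜 e) (a : ι → 𝕜) {s : Finset ι} {G : E}
    (hG : ∀ p ∈ s, inner 𝕜 G (e p) = 0) :
    ‖G + ∑ p ∈ s, a p • e p‖ ^ 2 = ‖G‖ ^ 2 + ∑ p ∈ s, ‖a p‖ ^ 2 := by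
  have horth : inner 𝕜 G (∑ p ∈ s, a p • e p) = 0 := by
    rw [inner_sum, Finset.sum_eq_zero fun p hp => by rw [inner_smul_right, hG p hp, mul_zero]]
  have hsum : ‖∑ p ∈ s, a p • e p‖ ^ 2 = ∑ p ∈ s, ‖a p‖ ^ 2 := by
    rw [@InnerProductSpace.norm_sq_eq_re_inner 𝕜, he.inner_sum, map_sum]
    exact Finset.sum_congr rfl fun p _ => by
      rw [RCLike.conj_mul, ← RCLike.ofReal_pow, RCLike.ofReal_re]
  rw [norm_add_pow_two (𝕜 := 𝕜), horth, hsum]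
  simp

lemma mul_norm_le_norm_add_sum {e : ι → E} (he : Orthonormal 𝕜 e) {σ : ι → 𝕜} {κ : ℝ}
    (hκ₀ : 0 ≤ κ) (hκ₁ : κ ≤ 1) {F : E} (hF : ∀ p, inner 𝕜 (e p) F ≠ 0 → κ ≤ ‖1 + σ p‖)
    (s : Finset ι) :
    κ * ‖F‖ ≤ ‖F + ∑ p ∈ s, (σ p * inner 𝕜 (e p) F) • e p‖ := by
  set c : ι → 𝕜 := fun p => inner 𝕜 (e p) F
  set G := F - ∑ p ∈ s, c p • e p with hG
  have horth : ∀ p ∈ s, inner 𝕜 G (e p) = 0 := fun p hp => by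
    rw [inner_eq_zero_symm, hG, inner_sub_right, he.inner_right_sum c hp, sub_self]
  have hsplit : F = G + ∑ p ∈ s, c p • e p := (sub_add_cancel _ _).symm
  have hsplit' : F + ∑ p ∈ s, (σ p * c p) • e p = G + ∑ p ∈ s, ((1 + σ p) * c p) • e p := by
    simp only [add_mul, one_mul, add_smul, Finset.sum_add_distrib, ← add_assoc, ← hsplit]
  have hcoef (p : ι) : κ ^ 2 * ‖c p‖ ^ 2 ≤ ‖(1 + σ p) * c p‖ ^ 2 := by
    rw [norm_mul, ← mul_pow]
    rcases eq_or_ne (c p) 0 with hp | hp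
    · simp [hp]
    · gcongr
      exact hF p hp
  rw [← sq_le_sq₀ (by positivity) (norm_nonneg _), mul_pow, hsplit']
  nth_rw 1 [hsplit]
  rw [norm_add_sum_smul_sq he _ horth, norm_add_sum_smul_sq he _ horth, mul_add, Finset.mul_sum]
  exact add_le_add (mul_le_of_le_one_left (sq_nonneg _) (pow_le_one₀ hκ₀ hκ₁))
    (Finset.sum_le_sum fun p _ => hcoef p)

lemma mul_norm_le_norm_add_tsum {e : ι → E} (he : Orthonormal 𝕜 e) {σ : ι → 𝕜} {κ : ℝ}
    (hκ₀ : 0 ≤ κ) (hκ₁ : κ ≤ 1) {F : E} (hF : ∀ p, inner 𝕜 (e p) F ≠ 0 → κ ≤ ‖1 + σ p‖)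
    (hsum : Summable fun p => (σ p * inner 𝕜 (e p) F) • e p) :
    κ * ‖F‖ ≤ ‖F + ∑' p, (σ p * inner 𝕜 (e p) F) • e p‖ :=
  ge_of_tendsto (hsum.hasSum.const_add F).norm
    (Eventually.of_forall (mul_norm_le_norm_add_sum he hκ₀ hκ₁ hF))

lemma summable_norm_mul_inner_smul {e : ι → E} (he : Orthonormal 𝕜 e) {σ : ι → 𝕜}
    (hσ : Summable fun p => ‖σ p‖ ^ 2) (F : E) :
    Summable fun p => ‖(σ p * inner 𝕜 (e p) F) • e p‖ := by
  refine .of_nonneg_of_le (fun _ => norm_nonneg _) (fun p => ?_)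
    (hσ.add (he.inner_products_summable F))
  rw [norm_smul, he.norm_eq_one, mul_one, norm_mul]
  nlinarith [sq_nonneg (‖σ p‖ - ‖inner 𝕜 (e p) F‖), sq_nonneg (‖σ p‖ + ‖inner 𝕜 (e p) F‖)]

end DiagonalPerturbation

section PolynomialIntegral

open Polynomial

/-- Integration over `[a, b]` as a linear functional on real polynomials. -/
def polyIntegral (a b : ℝ) : ℝ[X] →ₗ[ℝ] ℝ where
  toFun p := ∫ x in a..b, p.eval x
  map_add' p q := by
    simp only [eval_add]
    exact intervalIntegral.integral_add (p.continuous.intervalIntegrable a b)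
      (q.continuous.intervalIntegrable a b)
  map_smul' c p := by
    simp only [eval_smul, intervalIntegral.integral_smul, RingHom.id_apply]

lemma polyIntegral_apply (a b : ℝ) (p : ℝ[X]) : polyIntegral a b p = ∫ x in a..b, p.eval x := rfl

lemma polyIntegral_C_mul (a b c : ℝ) (p : ℝ[X]) :
    polyIntegral a b (C c * p) = c * polyIntegral a b p := by
  rw [← smul_eq_C_mul, map_smul, smul_eq_mul]

lemma polyIntegral_derivative_mul {a b : ℝ} {p : ℝ[X]} (ha : p.eval a = 0) (hb : p.eval b = 0)
    (q : ℝ[X]) :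
    polyIntegral a b (derivative p * q) = -polyIntegral a b (p * derivative q) := by
  have by_parts := intervalIntegral.integral_deriv_mul_eq_sub (a := a) (b := b)
    (fun x _ => p.hasDerivAt x) (fun x _ => q.hasDerivAt x)
    ((derivative p).continuous.intervalIntegrable a b)
    ((derivative q).continuous.intervalIntegrable a b)
  rw [eq_neg_iff_add_eq_zero, ← map_add, polyIntegral_apply]
  simpa only [eval_add, eval_mul, ha, hb, zero_mul, sub_zero] using by_parts

lemma polyIntegral_iterate_derivative_mul {a b : ℝ} {w : ℝ[X]} (ha : w.eval a = 0)
    (hb : w.eval b = 0) {k : ℕ} {p : ℝ[X]} (hp : w ^ k ∣ p) (q : ℝ[X]) :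
    polyIntegral a b (derivative^[k] p * q) =
      (-1) ^ k * polyIntegral a b (p * derivative^[k] q) := by
  induction k generalizing q with
  | zero => simp
  | succ k ih =>
    have hdvd : w ∣ derivative^[k] p := by
      simpa using pow_sub_dvd_iterate_derivative_of_pow_dvd k hp
    rw [Function.iterate_succ_apply',
      polyIntegral_derivative_mul (eval_eq_zero_of_dvd_of_eval_eq_zero hdvd ha)
        (eval_eq_zero_of_dvd_of_eval_eq_zero hdvd hb),
      ih ((pow_dvd_pow w k.le_succ).trans hp), ← Function.iterate_succ_apply]
    ring

end PolynomialIntegral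

section Legendre

open Polynomial

lemma iterate_derivative_eq_C_of_natDegree_le {R : Type*} [Semiring R] {p : R[X]} {k : ℕ}
    (hp : p.natDegree ≤ k) : derivative^[k] p = C (k.factorial • p.coeff k) := by
  rw [eq_C_of_natDegree_le_zero ((natDegree_iterate_derivative p k).trans (by lia)),
    coeff_iterate_derivative, zero_add, Nat.descFactorial_self]

lemma iteratedDeriv_eval {𝕜 : Type*} [NontriviallyNormedField 𝕜] (p : 𝕜[X]) (k : ℕ) :
    iteratedDeriv k (fun x => p.eval x) = fun x => (derivative^[k] p).eval x := by
  induction k with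
  | zero => rw [iteratedDeriv_zero, Function.iterate_zero_apply]
  | succ k ih =>
    rw [iteratedDeriv_succ, ih, Function.iterate_succ_apply']
    exact funext fun x => (derivative^[k] p).deriv

/-- The weight `1 - X²` of the associated Legendre functions. -/
def legendreWeight : ℝ[X] := 1 - X ^ 2

lemma eval_legendreWeight (s : ℝ) : legendreWeight.eval s = 1 - s ^ 2 := by simp [legendreWeight]

lemma natDegree_legendreWeight_pow_le (n : ℕ) : (legendreWeight ^ n).natDegree ≤ 2 * n := by
  have hw : legendreWeight.natDegree ≤ 2 := by unfold legendreWeight; compute_degree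
  exact (natDegree_pow_le_of_le n hw).trans_eq (mul_comm n 2)

lemma coeff_legendreWeight_pow (n : ℕ) : (legendreWeight ^ n).coeff (2 * n) = (-1) ^ n := by
  have hw : legendreWeight.natDegree ≤ 2 := by unfold legendreWeight; compute_degree
  rw [mul_comm, coeff_pow_of_natDegree_le hw]
  simp [legendreWeight, coeff_one]

lemma succ_mul_polyIntegral_legendreWeight_pow_succ (n : ℕ) :
    (2 * n + 3) * polyIntegral (-1) 1 (legendreWeight ^ (n + 1)) =
      2 * (n + 1) * polyIntegral (-1) 1 (legendreWeight ^ n) := by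
  have by_parts := polyIntegral_derivative_mul (a := -1) (b := 1)
    (p := legendreWeight ^ (n + 1)) (by simp [eval_legendreWeight])
    (by simp [eval_legendreWeight]) X
  have hderiv : derivative (legendreWeight ^ (n + 1)) * X =
      C (2 * (n + 1) : ℝ) * (legendreWeight ^ (n + 1) - legendreWeight ^ n) := by
    simp only [derivative_pow_succ, legendreWeight, derivative_sub, derivative_one,
      derivative_X, map_mul, map_add, map_one, map_natCast, map_ofNat]
    ring
  rw [hderiv, polyIntegral_C_mul, map_sub, derivative_X, mul_one] at by_parts
  linear_combination by_parts

lemma polyIntegral_legendreWeight_pow (n : ℕ) :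
    polyIntegral (-1) 1 (legendreWeight ^ n) =
      2 ^ (2 * n + 1) / ((2 * n + 1) * n.centralBinom) := by
  induction n with
  | zero => norm_num [polyIntegral_apply]
  | succ n ih =>
    have hrec := succ_mul_polyIntegral_legendreWeight_pow_succ n
    have hbinom : ((n : ℝ) + 1) * (n + 1).centralBinom = 2 * (2 * n + 1) * n.centralBinom := by
      exact_mod_cast n.succ_mul_centralBinom_succ
    have hpos : (0 : ℝ) < n.centralBinom := by exact_mod_cast n.centralBinom_pos
    have hpos' : (0 : ℝ) < (n + 1).centralBinom := by exact_mod_cast (n + 1).centralBinom_pos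
    rw [ih, mul_div_assoc', eq_div_iff (by positivity)] at hrec
    rw [eq_div_iff (by positivity)]
    push_cast
    refine mul_left_cancel₀ (n.cast_add_one_ne_zero (R := ℝ)) ?_
    linear_combination 2 * hrec +
      polyIntegral (-1) 1 (legendreWeight ^ (n + 1)) * (2 * n + 3) * hbinom

/-- The Legendre polynomial `P_n`, by Rodrigues' formula written with `1 - X²` instead of
`X² - 1` so that the base of the power is the weight of the associated functions. -/
def legendre (n : ℕ) : ℝ[X] :=
  C ((-1) ^ n / (2 ^ n * n.factorial) : ℝ) * derivative^[n] (legendreWeight ^ n)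

lemma natDegree_legendre_le (n : ℕ) : (legendre n).natDegree ≤ n := by
  have hw := natDegree_legendreWeight_pow_le n
  have hd := natDegree_iterate_derivative (legendreWeight ^ n) n
  exact (natDegree_C_mul_le _ _).trans (by lia)

lemma coeff_legendre_self (n : ℕ) : (legendre n).coeff n = n.centralBinom / 2 ^ n := by
  have hfac : (n.factorial : ℝ) ≠ 0 := by positivity
  rw [legendre, coeff_C_mul, coeff_iterate_derivative, ← two_mul, coeff_legendreWeight_pow,
    Nat.descFactorial_eq_factorial_mul_choose, ← Nat.centralBinom, nsmul_eq_mul]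
  push_cast
  field_simp
  rw [← pow_mul, mul_comm n 2, pow_mul, neg_one_sq, one_pow, one_mul]

lemma polyIntegral_legendre_mul (n : ℕ) (q : ℝ[X]) :
    polyIntegral (-1) 1 (legendre n * q) =
      polyIntegral (-1) 1 (legendreWeight ^ n * derivative^[n] q) / (2 ^ n * n.factorial) := by
  rw [legendre, mul_assoc, polyIntegral_C_mul, polyIntegral_iterate_derivative_mul
    (by simp [eval_legendreWeight]) (by simp [eval_legendreWeight]) dvd_rfl]
  have hsign : (-1 : ℝ) ^ n * (-1) ^ n = 1 := pow_mul_pow_eq_one n (by norm_num)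
  linear_combination (polyIntegral (-1) 1 (legendreWeight ^ n * derivative^[n] q) /
    (2 ^ n * n.factorial)) * hsign

lemma polyIntegral_legendre_mul_eq_zero {n : ℕ} {q : ℝ[X]} (hq : q.natDegree < n) :
    polyIntegral (-1) 1 (legendre n * q) = 0 := by
  rw [polyIntegral_legendre_mul, iterate_derivative_eq_zero hq, mul_zero, map_zero, zero_div]

lemma polyIntegral_legendre_mul_of_natDegree_le {n : ℕ} {q : ℝ[X]} (hq : q.natDegree ≤ n) :
    polyIntegral (-1) 1 (legendre n * q) =
      2 / (2 * n + 1) * (q.coeff n / (legendre n).coeff n) := by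
  have hfac : (n.factorial : ℝ) ≠ 0 := by positivity
  have hbinom : (n.centralBinom : ℝ) ≠ 0 := by exact_mod_cast n.centralBinom_ne_zero
  rw [polyIntegral_legendre_mul, iterate_derivative_eq_C_of_natDegree_le hq, mul_comm _ (C _),
    polyIntegral_C_mul, polyIntegral_legendreWeight_pow, coeff_legendre_self, nsmul_eq_mul]
  field_simp
  ring

/-- `D^m ((1 - X²)^m D^m P_n)`: up to the sign `(-1)^m`, the operator `D^m` composed with its
adjoint for the weight `(1 - X²)^m` and applied to `P_n`. It carries the `L²` pairing of associated
Legendre functions over to a pairing against a Legendre polynomial. -/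
def legendreGram (n m : ℕ) : ℝ[X] :=
  derivative^[m] (legendreWeight ^ m * derivative^[m] (legendre n))

lemma polyIntegral_assocLegendre (n k m : ℕ) :
    polyIntegral (-1) 1 (legendreWeight ^ m * derivative^[m] (legendre k) *
      derivative^[m] (legendre n)) =
      (-1) ^ m * polyIntegral (-1) 1 (legendre n * legendreGram k m) := by
  have hsign : (-1 : ℝ) ^ m * (-1) ^ m = 1 := pow_mul_pow_eq_one m (by norm_num)
  rw [mul_comm (legendre n), legendreGram, polyIntegral_iterate_derivative_mul
    (by simp [eval_legendreWeight]) (by simp [eval_legendreWeight]) (dvd_mul_right _ _),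
    ← mul_assoc, hsign, one_mul]

lemma natDegree_legendreWeight_pow_mul_le {n m : ℕ} (hmn : m ≤ n) :
    (legendreWeight ^ m * derivative^[m] (legendre n)).natDegree ≤ n + m := by
  have hw := natDegree_legendreWeight_pow_le m
  have hd := natDegree_iterate_derivative (legendre n) m
  have hP := natDegree_legendre_le n
  exact natDegree_mul_le.trans (by lia)

lemma natDegree_legendreGram_le (n m : ℕ) : (legendreGram n m).natDegree ≤ n := by
  rcases le_or_gt m n with hmn | hnm
  · exact (natDegree_iterate_derivative _ m).trans
      (by have := natDegree_legendreWeight_pow_mul_le hmn; lia)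
  · rw [legendreGram, iterate_derivative_eq_zero ((natDegree_legendre_le n).trans_lt hnm),
      mul_zero, iterate_map_zero, natDegree_zero]
    exact n.zero_le

lemma coeff_legendreGram_self {n m : ℕ} (hmn : m ≤ n) :
    (legendreGram n m).coeff n =
      (-1) ^ m * ((n + m).factorial / (n - m).factorial) * (legendre n).coeff n := by
  have hlead : (legendreWeight ^ m * derivative^[m] (legendre n)).coeff (n + m) =
      (-1) ^ m * (n.descFactorial m * (legendre n).coeff n) := by
    have hd := (natDegree_iterate_derivative (legendre n) m).trans
      (Nat.sub_le_sub_right (natDegree_legendre_le n) m)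
    rw [show n + m = 2 * m + (n - m) by lia, coeff_mul_add_eq_of_natDegree_le
      (natDegree_legendreWeight_pow_le m) hd, coeff_legendreWeight_pow, coeff_iterate_derivative,
      Nat.sub_add_cancel hmn, nsmul_eq_mul]
  have hdesc : ((n - m).factorial : ℝ) * n.descFactorial m = n.factorial := by
    exact_mod_cast Nat.factorial_mul_descFactorial hmn
  have hdesc' : (n.factorial : ℝ) * (n + m).descFactorial m = (n + m).factorial := by
    exact_mod_cast Nat.add_sub_cancel n m ▸ Nat.factorial_mul_descFactorial (Nat.le_add_left m n)
  have hfac : ((n - m).factorial : ℝ) ≠ 0 := by positivity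
  rw [legendreGram, coeff_iterate_derivative, hlead, nsmul_eq_mul, ← hdesc', ← hdesc]
  field_simp

lemma polyIntegral_assocLegendre_of_ne {n k : ℕ} (m : ℕ) (hnk : n ≠ k) :
    polyIntegral (-1) 1 (legendreWeight ^ m * derivative^[m] (legendre k) *
      derivative^[m] (legendre n)) = 0 := by
  wlog hlt : k < n generalizing n k
  · rw [mul_right_comm]
    exact this hnk.symm (by lia)
  rw [polyIntegral_assocLegendre,
    polyIntegral_legendre_mul_eq_zero ((natDegree_legendreGram_le k m).trans_lt hlt), mul_zero]

lemma polyIntegral_assocLegendre_self {n m : ℕ} (hmn : m ≤ n) :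
    polyIntegral (-1) 1 (legendreWeight ^ m * derivative^[m] (legendre n) *
      derivative^[m] (legendre n)) =
      2 / (2 * n + 1) * ((n + m).factorial / (n - m).factorial) := by
  have hlead : (legendre n).coeff n ≠ 0 := by
    have hbinom : (n.centralBinom : ℝ) ≠ 0 := by exact_mod_cast n.centralBinom_ne_zero
    rw [coeff_legendre_self]
    positivity
  have hsign : (-1 : ℝ) ^ m * (-1) ^ m = 1 := pow_mul_pow_eq_one m (by norm_num)
  rw [polyIntegral_assocLegendre, polyIntegral_legendre_mul_of_natDegree_le
    (natDegree_legendreGram_le n m), coeff_legendreGram_self hmn, mul_div_assoc, div_self hlead]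
  linear_combination (2 / (2 * n + 1) * ((n + m).factorial / (n - m).factorial) : ℝ) * hsign

lemma legP_eq_eval (n : ℕ) : legP n = fun s => (legendre n).eval s := by
  have hbase : (fun x : ℝ => (x ^ 2 - 1) ^ n) =
      fun x => (C ((-1) ^ n) * legendreWeight ^ n).eval x := by
    funext x
    rw [eval_C_mul, eval_pow, eval_legendreWeight, ← mul_pow]
    ring
  funext s
  rw [legP, hbase, iteratedDeriv_eval, iterate_derivative_C_mul]
  simp only [legendre, eval_C_mul]
  ring

lemma assocLegP_eq_eval (n m : ℕ) (s : ℝ) :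
    assocLegP n m s =
      (-1) ^ m * (1 - s ^ 2) ^ ((m : ℝ) / 2) * (derivative^[m] (legendre n)).eval s := by
  rw [assocLegP, legP_eq_eval, iteratedDeriv_eval]

lemma continuous_assocLegP (n m : ℕ) : Continuous (assocLegP n m) := by
  have hpow : Continuous fun s : ℝ => (1 - s ^ 2) ^ ((m : ℝ) / 2) :=
    Continuous.rpow_const (by fun_prop) fun s => Or.inr (by positivity)
  rw [funext (assocLegP_eq_eval n m)]
  fun_prop

lemma assocLegP_mul_assocLegP (n k m : ℕ) {s : ℝ} (hs : s ^ 2 ≤ 1) :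
    assocLegP n m s * assocLegP k m s =
      (legendreWeight ^ m * derivative^[m] (legendre k) * derivative^[m] (legendre n)).eval s := by
  have hsign : (-1 : ℝ) ^ m * (-1) ^ m = 1 := pow_mul_pow_eq_one m (by norm_num)
  have hroot : (1 - s ^ 2) ^ ((m : ℝ) / 2) * (1 - s ^ 2) ^ ((m : ℝ) / 2) = (1 - s ^ 2) ^ m := by
    rw [← Real.rpow_add_of_nonneg (by linarith) (by positivity) (by positivity), add_halves,
      Real.rpow_natCast]
  simp only [assocLegP_eq_eval, eval_mul, eval_pow, eval_legendreWeight, ← hroot]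
  linear_combination ((1 - s ^ 2) ^ ((m : ℝ) / 2) * (1 - s ^ 2) ^ ((m : ℝ) / 2) *
    (derivative^[m] (legendre n)).eval s * (derivative^[m] (legendre k)).eval s) * hsign

lemma integral_comp_cos_mul_sin {f : ℝ → ℝ} (hf : Continuous f) :
    ∫ θ in (0 : ℝ)..Real.pi, f (Real.cos θ) * Real.sin θ = ∫ s in (-1 : ℝ)..1, f s := by
  have hsubst := intervalIntegral.integral_comp_mul_deriv (a := 0) (b := Real.pi)
    (fun θ _ => Real.hasDerivAt_cos θ) (by fun_prop) hf
  rw [Real.cos_zero, Real.cos_pi, intervalIntegral.integral_symm (-1) 1] at hsubst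
  simpa only [Function.comp_apply, mul_neg, intervalIntegral.integral_neg, neg_inj] using hsubst

lemma integral_assocLegP_cos_mul_assocLegP_cos (n k m : ℕ) :
    ∫ θ in (0 : ℝ)..Real.pi,
        assocLegP n m (Real.cos θ) * assocLegP k m (Real.cos θ) * Real.sin θ =
      polyIntegral (-1) 1 (legendreWeight ^ m * derivative^[m] (legendre k) *
        derivative^[m] (legendre n)) := by
  simp only [assocLegP_mul_assocLegP n k m (Real.cos_sq_le_one _)]
  exact integral_comp_cos_mul_sin (Polynomial.continuous _)

end Legendre

section Longitude

lemma integral_deriv_mul_of_periodic {u v u' v' : ℝ → ℝ} {T : ℝ}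
    (hu : ∀ x, HasDerivAt u (u' x) x) (hv : ∀ x, HasDerivAt v (v' x) x)
    (hu' : Continuous u') (hv' : Continuous v')
    (hper_u : Function.Periodic u T) (hper_v : Function.Periodic v T) :
    ∫ x in (0 : ℝ)..T, u' x * v x = -∫ x in (0 : ℝ)..T, u x * v' x := by
  have by_parts := intervalIntegral.integral_mul_deriv_eq_deriv_mul (a := 0) (b := T)
    (fun x _ => hu x) (fun x _ => hv x) (hu'.intervalIntegrable 0 T) (hv'.intervalIntegrable 0 T)
  rw [hper_u.eq, hper_v.eq, sub_self, zero_sub] at by_parts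
  rw [by_parts, neg_neg]

/-- The real Fourier basis of the longitude circle: `cos (mφ)` for `m ≥ 0` and `sin (|m|φ)` for
`m < 0`. -/
def trigBasis (m : ℤ) (φ : ℝ) : ℝ :=
  if 0 ≤ m then Real.cos (m * φ) else Real.sin (-m * φ)

lemma trigBasis_of_nonneg {m : ℤ} (hm : 0 ≤ m) : trigBasis m = fun φ => Real.cos (m * φ) :=
  funext fun _ => if_pos hm

lemma trigBasis_of_neg {m : ℤ} (hm : m < 0) : trigBasis m = fun φ => Real.sin (-m * φ) :=
  funext fun _ => if_neg hm.not_ge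

lemma hasDerivAt_trigBasis (m : ℤ) (φ : ℝ) :
    HasDerivAt (trigBasis m) (-m * trigBasis (-m) φ) φ := by
  rcases lt_trichotomy m 0 with hm | rfl | hm
  · rw [trigBasis_of_neg hm, trigBasis_of_nonneg (neg_nonneg.mpr hm.le), Int.cast_neg, mul_comm]
    simpa only [mul_one] using ((hasDerivAt_id' φ).const_mul (-m : ℝ)).sin
  · simpa [trigBasis_of_nonneg] using hasDerivAt_const φ (1 : ℝ)
  · rw [trigBasis_of_nonneg hm.le, trigBasis_of_neg (neg_lt_zero.mpr hm), Int.cast_neg, neg_neg,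
      neg_mul_comm, mul_comm]
    simpa only [mul_one] using ((hasDerivAt_id' φ).const_mul (m : ℝ)).cos

lemma continuous_trigBasis (m : ℤ) : Continuous (trigBasis m) :=
  continuous_iff_continuousAt.mpr fun φ => (hasDerivAt_trigBasis m φ).continuousAt

lemma periodic_trigBasis (m : ℤ) : Function.Periodic (trigBasis m) (2 * Real.pi) := by
  intro φ
  rcases le_or_gt 0 m with hm | hm
  · simpa only [trigBasis_of_nonneg hm, mul_add] using Real.cos_add_int_mul_two_pi (m * φ) m
  · simpa only [trigBasis_of_neg hm, mul_add, Int.cast_neg] using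
      Real.sin_add_int_mul_two_pi (-m * φ) (-m)

lemma trigBasis_sq_add_trigBasis_neg_sq {m : ℤ} (hm : m ≠ 0) (φ : ℝ) :
    trigBasis m φ * trigBasis m φ + trigBasis (-m) φ * trigBasis (-m) φ = 1 := by
  rcases hm.lt_or_gt with hm | hm
  · rw [trigBasis_of_neg hm, trigBasis_of_nonneg (neg_nonneg.mpr hm.le), Int.cast_neg]
    linear_combination Real.sin_sq_add_cos_sq (-m * φ)
  · rw [trigBasis_of_nonneg hm.le, trigBasis_of_neg (neg_lt_zero.mpr hm), Int.cast_neg, neg_neg]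
    linear_combination Real.sin_sq_add_cos_sq (m * φ)

lemma mul_integral_trigBasis (m k : ℤ) :
    m * ∫ φ in (0 : ℝ)..2 * Real.pi, trigBasis m φ * trigBasis k φ =
      k * ∫ φ in (0 : ℝ)..2 * Real.pi, trigBasis (-m) φ * trigBasis (-k) φ := by
  have by_parts := integral_deriv_mul_of_periodic (hasDerivAt_trigBasis (-m))
    (hasDerivAt_trigBasis k) ((continuous_trigBasis _).const_mul _)
    ((continuous_trigBasis _).const_mul _) (periodic_trigBasis (-m)) (periodic_trigBasis k)
  simp only [neg_neg, Int.cast_neg, mul_assoc, mul_left_comm _ (-k : ℝ),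
    intervalIntegral.integral_const_mul] at by_parts
  linear_combination by_parts

lemma integral_trigBasis_mul_of_ne {m k : ℤ} (hmk : m ≠ k) :
    ∫ φ in (0 : ℝ)..2 * Real.pi, trigBasis m φ * trigBasis k φ = 0 := by
  have hpos := mul_integral_trigBasis m k
  have hneg := mul_integral_trigBasis (-m) (-k)
  simp only [neg_neg, Int.cast_neg] at hneg
  by_cases hopp : m = -k
  · have hk : (k : ℝ) ≠ 0 := by
      have : k ≠ 0 := by lia
      exact_mod_cast this
    subst hopp
    simp only [neg_neg, Int.cast_neg, mul_comm (trigBasis k _)] at hpos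
    refine (mul_eq_zero.mp ?_).resolve_left hk
    linear_combination -hpos / 2
  · have hsq : (m - k : ℝ) * (m + k) ≠ 0 := by
      have : (m - k) * (m + k) ≠ 0 := mul_ne_zero (by lia) (by lia)
      exact_mod_cast this
    refine (mul_eq_zero.mp ?_).resolve_left hsq
    linear_combination m * hpos - k * hneg

lemma integral_trigBasis_mul_self (m : ℤ) :
    ∫ φ in (0 : ℝ)..2 * Real.pi, trigBasis m φ * trigBasis m φ =
      if m = 0 then 2 * Real.pi else Real.pi := by
  split_ifs with hm
  · simp [hm, trigBasis_of_nonneg]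
  · have hsymm : ∫ φ in (0 : ℝ)..2 * Real.pi, trigBasis m φ * trigBasis m φ =
        ∫ φ in (0 : ℝ)..2 * Real.pi, trigBasis (-m) φ * trigBasis (-m) φ :=
      mul_left_cancel₀ (by exact_mod_cast hm) (mul_integral_trigBasis m m)
    have hcont (k : ℤ) : Continuous fun φ => trigBasis k φ * trigBasis k φ :=
      (continuous_trigBasis k).mul (continuous_trigBasis k)
    have hsum := intervalIntegral.integral_add (μ := volume)
      ((hcont m).intervalIntegrable 0 (2 * Real.pi)) ((hcont (-m)).intervalIntegrable _ _)
    simp only [trigBasis_sq_add_trigBasis_neg_sq hm, intervalIntegral.integral_const, sub_zero,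
      smul_eq_mul, mul_one] at hsum
    linarith

end Longitude

section SphericalHarmonic

lemma sInner_comm (u v : SphereFun) : sInner u v = sInner v u := by
  simp only [sInner, mul_comm (u _ _)]

lemma sInner_const_mul_right (c : ℝ) (u v : SphereFun) :
    sInner u (fun θ φ => c * v θ φ) = c * sInner u v := by
  simp only [sInner, mul_left_comm _ c, mul_assoc c, intervalIntegral.integral_const_mul]

lemma l2Norm_const_mul (c : ℝ) (u : SphereFun) :
    l2Norm (fun θ φ => c * u θ φ) = |c| * l2Norm u := by
  rw [l2Norm, sInner_const_mul_right, sInner_comm, sInner_const_mul_right, ← mul_assoc,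
    Real.sqrt_mul (mul_self_nonneg c), Real.sqrt_mul_self_eq_abs, l2Norm]

/-- The constant normalizing `Y_n^m` in `L²(S²)`, with its sign `(-1)^m`. -/
def harmonicNorm (n : ℕ) (m : ℤ) : ℝ :=
  if m = 0 then Real.sqrt ((2 * n + 1) / (4 * Real.pi))
  else (-1) ^ m.natAbs * Real.sqrt 2 *
    Real.sqrt ((2 * n + 1) / (4 * Real.pi) *
      ((n - m.natAbs).factorial / (n + m.natAbs).factorial))

lemma harmonicNorm_neg (n : ℕ) (m : ℤ) : harmonicNorm n (-m) = harmonicNorm n m := by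
  simp only [harmonicNorm, neg_eq_zero, Int.natAbs_neg]

lemma harmonicNorm_sq_mul_integral_trigBasis (n : ℕ) (m : ℤ) :
    harmonicNorm n m ^ 2 * ∫ φ in (0 : ℝ)..2 * Real.pi, trigBasis m φ * trigBasis m φ =
      (2 * n + 1) / 2 * ((n - m.natAbs).factorial / (n + m.natAbs).factorial) := by
  rw [integral_trigBasis_mul_self]
  rcases eq_or_ne m 0 with rfl | hm
  · have hfac : (n.factorial : ℝ) ≠ 0 := by positivity
    simp only [harmonicNorm, if_true, Int.natAbs_zero, Nat.sub_zero, Nat.add_zero,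
      div_self hfac, Real.sq_sqrt (show 0 ≤ (2 * n + 1) / (4 * Real.pi) by positivity)]
    field_simp
    norm_num
  · simp only [harmonicNorm, if_neg hm, mul_pow, ← pow_mul, mul_comm m.natAbs, pow_mul (-1 : ℝ) 2,
      neg_one_sq, one_pow]
    rw [Real.sq_sqrt zero_le_two, Real.sq_sqrt (by positivity)]
    field_simp
    norm_num

lemma Ynm_eq (n : ℕ) (m : ℤ) (θ φ : ℝ) :
    Ynm n m θ φ = harmonicNorm n m * assocLegP n m.natAbs (Real.cos θ) * trigBasis m φ := by
  unfold Ynm harmonicNorm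
  rcases lt_trichotomy m 0 with hm | rfl | hm
  · have habs : (m.natAbs : ℝ) = -m := by
      rw [Nat.cast_natAbs, abs_of_neg hm, Int.cast_neg]
    rw [if_neg hm.ne, if_neg hm.not_gt, if_neg hm.ne, habs, trigBasis_of_neg hm]
  · simp [trigBasis_of_nonneg, assocLegP]
  · have habs : (m.natAbs : ℝ) = m := by rw [Nat.cast_natAbs, abs_of_pos hm]
    rw [if_neg hm.ne', if_pos hm, if_neg hm.ne', habs, trigBasis_of_nonneg hm.le]

lemma continuous_Ynm (n : ℕ) (m : ℤ) : Continuous (Function.uncurry (Ynm n m)) := by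
  have hP := continuous_assocLegP n m.natAbs
  have hT := continuous_trigBasis m
  rw [show Function.uncurry (Ynm n m) = fun z => _ from funext fun z => Ynm_eq n m z.1 z.2]
  fun_prop

lemma sInner_Ynm (n k : ℕ) (m l : ℤ) :
    sInner (Ynm n m) (Ynm k l) =
      harmonicNorm n m * harmonicNorm k l *
        (∫ φ in (0 : ℝ)..2 * Real.pi, trigBasis m φ * trigBasis l φ) *
        ∫ θ in (0 : ℝ)..Real.pi, assocLegP n m.natAbs (Real.cos θ) *
          assocLegP k l.natAbs (Real.cos θ) * Real.sin θ := by
  have hsep (θ φ : ℝ) : Ynm n m θ φ * Ynm k l θ φ * Real.sin θ =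
      harmonicNorm n m * harmonicNorm k l * (trigBasis m φ * trigBasis l φ) *
        (assocLegP n m.natAbs (Real.cos θ) * assocLegP k l.natAbs (Real.cos θ) * Real.sin θ) := by
    rw [Ynm_eq, Ynm_eq]
    ring
  simp only [sInner, hsep, intervalIntegral.integral_const_mul, intervalIntegral.integral_mul_const]

lemma sInner_Ynm_self {n : ℕ} {m : ℤ} (hmn : |m| ≤ n) : sInner (Ynm n m) (Ynm n m) = 1 := by
  have hmn' : m.natAbs ≤ n := by
    rw [Int.abs_eq_natAbs] at hmn
    lia
  rw [sInner_Ynm, integral_assocLegP_cos_mul_assocLegP_cos,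
    polyIntegral_assocLegendre_self hmn', ← sq, harmonicNorm_sq_mul_integral_trigBasis]
  field_simp

lemma sInner_Ynm_of_ne {n k : ℕ} {m l : ℤ} (hne : (n, m) ≠ (k, l)) :
    sInner (Ynm n m) (Ynm k l) = 0 := by
  rw [sInner_Ynm]
  rcases eq_or_ne m l with rfl | hml
  · have hnk : n ≠ k := by rintro rfl; exact hne rfl
    rw [integral_assocLegP_cos_mul_assocLegP_cos, polyIntegral_assocLegendre_of_ne _ hnk, mul_zero]
  · rw [integral_trigBasis_mul_of_ne hml, mul_zero, zero_mul]

end SphericalHarmonic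

section SphereMeasure

/-- The measure `sin θ dθ` on `(0, π]`. -/
def colatitudeMeasure : Measure ℝ :=
  (volume.restrict (Set.Ioc 0 Real.pi)).withDensity fun θ => ENNReal.ofReal (Real.sin θ)

instance : IsFiniteMeasure colatitudeMeasure :=
  isFiniteMeasure_withDensity_ofReal
    (Real.continuous_sin.integrableOn_Ioc (a := 0) (b := Real.pi)).hasFiniteIntegral

lemma integral_colatitudeMeasure (g : ℝ → ℝ) :
    ∫ θ, g θ ∂colatitudeMeasure = ∫ θ in (0 : ℝ)..Real.pi, g θ * Real.sin θ := by
  rw [colatitudeMeasure, integral_withDensity_eq_integral_toReal_smul (by fun_prop) (by simp),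
    intervalIntegral.integral_of_le Real.pi_pos.le]
  refine setIntegral_congr_fun measurableSet_Ioc fun θ hθ => ?_
  simp only [ENNReal.toReal_ofReal (Real.sin_nonneg_of_nonneg_of_le_pi hθ.1.le hθ.2), smul_eq_mul,
    mul_comm]

/-- The surface measure `sin θ dθ dφ` of the unit sphere in colatitude-longitude coordinates. -/
def sphereMeasure : Measure (ℝ × ℝ) :=
  colatitudeMeasure.prod (volume.restrict (Set.Ioc 0 (2 * Real.pi)))

instance : IsFiniteMeasure sphereMeasure := by
  unfold sphereMeasure
  infer_instance

lemma ae_sphereMeasure_mem :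
    ∀ᵐ z ∂sphereMeasure, z ∈ Set.Icc 0 Real.pi ×ˢ Set.Icc 0 (2 * Real.pi) := by
  have hθ : ∀ᵐ θ ∂colatitudeMeasure, θ ∈ Set.Ioc 0 Real.pi :=
    (withDensity_absolutelyContinuous _ _).ae_le (ae_restrict_mem measurableSet_Ioc)
  have hφ : ∀ᵐ φ ∂volume.restrict (Set.Ioc 0 (2 * Real.pi)), φ ∈ Set.Ioc 0 (2 * Real.pi) :=
    ae_restrict_mem measurableSet_Ioc
  filter_upwards [Measure.quasiMeasurePreserving_fst.ae hθ,
    Measure.quasiMeasurePreserving_snd.ae hφ] with z hz₁ hz₂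
  exact ⟨Set.Ioc_subset_Icc_self hz₁, Set.Ioc_subset_Icc_self hz₂⟩

lemma memLp_sphereMeasure_of_continuous {f : ℝ × ℝ → ℝ} (hf : Continuous f) (p : ℝ≥0∞) :
    MemLp f p sphereMeasure := by
  obtain ⟨C, hC⟩ := (isCompact_Icc.prod isCompact_Icc).exists_bound_of_continuousOn
    (s := Set.Icc 0 Real.pi ×ˢ Set.Icc 0 (2 * Real.pi)) hf.continuousOn
  exact .of_bound hf.aestronglyMeasurable C (ae_sphereMeasure_mem.mono hC)

variable {u v : SphereFun}

lemma sInner_eq_integral (hu : MemLp (Function.uncurry u) 2 sphereMeasure)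
    (hv : MemLp (Function.uncurry v) 2 sphereMeasure) :
    sInner u v = ∫ z, Function.uncurry u z * Function.uncurry v z ∂sphereMeasure := by
  have hint : Integrable (fun z => Function.uncurry u z * Function.uncurry v z) sphereMeasure :=
    hu.integrable_mul hv
  rw [sphereMeasure, integral_prod_symm _ hint, sInner,
    intervalIntegral.integral_of_le Real.two_pi_pos.le]
  exact integral_congr_ae (.of_forall fun φ => (integral_colatitudeMeasure _).symm)

lemma sInner_eq_inner_toLp (hu : MemLp (Function.uncurry u) 2 sphereMeasure)
    (hv : MemLp (Function.uncurry v) 2 sphereMeasure) :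
    sInner u v = inner ℝ (hu.toLp _) (hv.toLp _) := by
  rw [sInner_eq_integral hu hv, L2.inner_def]
  refine integral_congr_ae ?_
  filter_upwards [hu.coeFn_toLp, hv.coeFn_toLp] with z hzu hzv
  rw [hzu, hzv, Real.inner_apply]

lemma l2Norm_eq_norm_toLp (hu : MemLp (Function.uncurry u) 2 sphereMeasure) :
    l2Norm u = ‖hu.toLp _‖ := by
  rw [l2Norm, sInner_eq_inner_toLp hu hu, norm_eq_sqrt_real_inner]

lemma sInner_eq_integral_colatitude (hu : Continuous (Function.uncurry u))
    (hv : Continuous (Function.uncurry v)) :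
    sInner u v =
      ∫ θ, (∫ φ in (0 : ℝ)..2 * Real.pi, u θ φ * v θ φ) ∂colatitudeMeasure := by
  have hmu := memLp_sphereMeasure_of_continuous hu 2
  have hmv := memLp_sphereMeasure_of_continuous hv 2
  have hint : Integrable (fun z => Function.uncurry u z * Function.uncurry v z) sphereMeasure :=
    hmu.integrable_mul hmv
  simp only [intervalIntegral.integral_of_le Real.two_pi_pos.le]
  rw [sInner_eq_integral hmu hmv, sphereMeasure, integral_prod _ hint]
  rfl

end SphereMeasure

section LongitudeDerivative

/-- A function on the sphere that is continuous and continuously differentiable in the longitude,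
without any regularity in the colatitude. This is the domain on which `∂_φ` is skew-adjoint. -/
structure ContDiffPhi (u : SphereFun) : Prop where
  continuous : Continuous (Function.uncurry u)
  differentiable : ∀ θ, Differentiable ℝ (u θ)
  continuous_dPhi : Continuous (Function.uncurry (dPhi u))
  periodic : PeriodicPhi u

lemma ContDiffPhi.hasDerivAt {u : SphereFun} (hu : ContDiffPhi u) (θ φ : ℝ) :
    HasDerivAt (u θ) (dPhi u θ φ) φ :=
  (hu.differentiable θ φ).hasDerivAt

lemma ContDiffPhi.of_contDiff {u : SphereFun} (hu : ContDiff ℝ 1 (Function.uncurry u))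
    (hper : PeriodicPhi u) : ContDiffPhi u := by
  have hslice (z : ℝ × ℝ) :
      HasDerivAt (u z.1) (fderiv ℝ (Function.uncurry u) z (0, 1)) z.2 :=
    HasFDerivAt.comp_hasDerivAt (l := Function.uncurry u) z.2
      (hu.differentiable one_ne_zero z).hasFDerivAt
      ((hasDerivAt_const z.2 z.1).prodMk (hasDerivAt_id' z.2))
  have hdPhi : Function.uncurry (dPhi u) = fun z => fderiv ℝ (Function.uncurry u) z (0, 1) :=
    funext fun z => (hslice z).deriv
  refine ⟨hu.continuous, fun θ φ => (hslice (θ, φ)).differentiableAt, ?_, hper⟩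
  rw [hdPhi]
  exact (hu.continuous_fderiv one_ne_zero).clm_apply continuous_const

lemma sInner_dPhi_left {u v : SphereFun} (hu : ContDiffPhi u) (hv : ContDiffPhi v) :
    sInner (dPhi u) v = -sInner u (dPhi v) := by
  rw [sInner_eq_integral_colatitude hu.continuous_dPhi hv.continuous,
    sInner_eq_integral_colatitude hu.continuous hv.continuous_dPhi, ← integral_neg]
  congr 1 with θ
  exact integral_deriv_mul_of_periodic (hu.hasDerivAt θ) (hv.hasDerivAt θ)
    (hu.continuous_dPhi.comp (Continuous.prodMk_right θ))
    (hv.continuous_dPhi.comp (Continuous.prodMk_right θ)) (hu.periodic θ) (hv.periodic θ)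

lemma hasDerivAt_Ynm (n : ℕ) (m : ℤ) (θ φ : ℝ) :
    HasDerivAt (Ynm n m θ) (-m * Ynm n (-m) θ φ) φ := by
  rw [funext (Ynm_eq n m θ), Ynm_eq, harmonicNorm_neg, Int.natAbs_neg, mul_left_comm]
  exact (hasDerivAt_trigBasis m φ).const_mul _

lemma dPhi_Ynm (n : ℕ) (m : ℤ) : dPhi (Ynm n m) = fun θ φ => -m * Ynm n (-m) θ φ :=
  funext fun θ => funext fun φ => (hasDerivAt_Ynm n m θ φ).deriv

lemma contDiffPhi_Ynm (n : ℕ) (m : ℤ) : ContDiffPhi (Ynm n m) where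
  continuous := continuous_Ynm n m
  differentiable θ φ := (hasDerivAt_Ynm n m θ φ).differentiableAt
  continuous_dPhi := by
    rw [dPhi_Ynm]
    exact (continuous_Ynm n (-m)).const_mul (-m : ℝ)
  periodic θ φ := by rw [Ynm_eq, Ynm_eq, periodic_trigBasis m φ]

lemma coeff_dPhi {u : SphereFun} (hu : ContDiffPhi u) (n : ℕ) (m : ℤ) :
    coeff (dPhi u) n m = m * coeff u n (-m) := by
  rw [coeff, coeff, sInner_dPhi_left hu (contDiffPhi_Ynm n m), dPhi_Ynm, sInner_const_mul_right,
    neg_mul, neg_neg]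

end LongitudeDerivative

section InverseLaplacian

/-- The indices `(n, m)` of the mean-zero spherical harmonics. -/
def harmonicIndex : Set (ℕ × ℤ) := {p | 1 ≤ p.1 ∧ |p.2| ≤ p.1}

/-- The eigenvalue `-1/(n(n+1))` of `Δ⁻¹` on the spherical harmonics of degree `n`. -/
def invLapEigenvalue (n : ℕ) : ℝ := -1 / (n * (n + 1))

/-- `Y_n^m` as an element of `L²(S²)`. -/
def harmonicLp (p : harmonicIndex) : Lp ℝ 2 sphereMeasure :=
  (memLp_sphereMeasure_of_continuous (continuous_Ynm p.1.1 p.1.2) 2).toLp _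

lemma orthonormal_harmonicLp : Orthonormal ℝ harmonicLp := by
  classical
  refine orthonormal_iff_ite.mpr fun p q => ?_
  rw [harmonicLp, harmonicLp, ← sInner_eq_inner_toLp]
  split_ifs with hpq
  · rw [hpq]
    exact sInner_Ynm_self q.2.2
  · exact sInner_Ynm_of_ne fun h => hpq (Subtype.ext h)

lemma summable_invLapEigenvalue_sq :
    Summable fun p : harmonicIndex => ‖invLapEigenvalue p.1.1‖ ^ 2 := by
  have hdegree : Summable fun n : ℕ => 1 / (n : ℝ) ^ 2 :=
    Real.summable_one_div_nat_pow.mpr one_lt_two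
  have hdegree_succ : Summable fun n : ℕ => 1 / ((n : ℝ) + 1) ^ 2 := by
    simpa using (summable_nat_add_iff 1).mpr hdegree
  have horder : Summable fun m : ℤ => 1 / (|(m : ℝ)| + 1) ^ 2 := by
    apply Summable.of_nat_of_neg <;> simpa using hdegree_succ
  have hprod := (hdegree.mul_of_nonneg horder (fun _ => by positivity)
    (fun _ => by positivity)).comp_injective (Subtype.val_injective (p := (· ∈ harmonicIndex)))
  refine .of_nonneg_of_le (fun _ => sq_nonneg _) ?_ hprod
  rintro ⟨⟨n, m⟩, hn : 1 ≤ n, hmn : |m| ≤ n⟩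
  have : (0 : ℝ) < n := by exact_mod_cast hn
  have hmn' : |(m : ℝ)| ≤ n := by exact_mod_cast hmn
  rw [Function.comp_apply, invLapEigenvalue, norm_div, norm_neg, norm_one,
    Real.norm_of_nonneg (by positivity), div_pow, one_pow, mul_pow, one_div_mul_one_div]
  gcongr

variable {f : SphereFun}

lemma inner_harmonicLp_toLp (hf : MemLp (Function.uncurry f) 2 sphereMeasure)
    (p : harmonicIndex) : inner ℝ (harmonicLp p) (hf.toLp _) = coeff f p.1.1 p.1.2 := by
  rw [harmonicLp, ← sInner_eq_inner_toLp, sInner_comm, coeff]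

/-- `Δ⁻¹` on `L²(S²)`, diagonal in the spherical harmonics. -/
def invLapLp (F : Lp ℝ 2 sphereMeasure) : Lp ℝ 2 sphereMeasure :=
  ∑' p, (invLapEigenvalue p.1.1 * inner ℝ (harmonicLp p) F) • harmonicLp p

lemma summable_norm_invLapLp (F : Lp ℝ 2 sphereMeasure) :
    Summable fun p => ‖(invLapEigenvalue p.1.1 * inner ℝ (harmonicLp p) F) • harmonicLp p‖ :=
  summable_norm_mul_inner_smul orthonormal_harmonicLp summable_invLapEigenvalue_sq F

lemma invLap_eq_tsum (f : SphereFun) (θ φ : ℝ) :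
    invLap f θ φ = ∑' p : harmonicIndex,
      invLapEigenvalue p.1.1 * coeff f p.1.1 p.1.2 * Ynm p.1.1 p.1.2 θ φ := by
  rw [tsum_subtype harmonicIndex
    fun p => invLapEigenvalue p.1 * coeff f p.1 p.2 * Ynm p.1 p.2 θ φ]
  classical
  exact tsum_congr fun p => by rw [Set.indicator_apply]; congr

lemma uncurry_invLap_ae_eq (hf : MemLp (Function.uncurry f) 2 sphereMeasure) :
    Function.uncurry (invLap f) =ᵐ[sphereMeasure] invLapLp (hf.toLp _) := by
  have hterm : ∀ᵐ z ∂sphereMeasure, ∀ p : harmonicIndex,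
      ((invLapEigenvalue p.1.1 * inner ℝ (harmonicLp p) (hf.toLp _)) • harmonicLp p :
        Lp ℝ 2 sphereMeasure) z =
      invLapEigenvalue p.1.1 * coeff f p.1.1 p.1.2 * Ynm p.1.1 p.1.2 z.1 z.2 := by
    refine ae_all_iff.mpr fun p => ?_
    rw [inner_harmonicLp_toLp]
    filter_upwards [Lp.coeFn_smul (invLapEigenvalue p.1.1 * coeff f p.1.1 p.1.2) (harmonicLp p),
      (memLp_sphereMeasure_of_continuous (continuous_Ynm p.1.1 p.1.2) 2).coeFn_toLp]
      with z hsmul hcoe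
    rw [hsmul, Pi.smul_apply, harmonicLp, hcoe, smul_eq_mul, Function.uncurry_def]
  filter_upwards [hterm, Lp.coeFn_tsum (tsum_enorm_ne_top_iff_summable_norm.mpr
    (summable_norm_invLapLp (hf.toLp _)))] with z hz hsum
  rw [invLapLp, hsum]
  exact (invLap_eq_tsum f z.1 z.2).trans (tsum_congr fun p => (hz p).symm)

lemma memLp_invLap (hf : MemLp (Function.uncurry f) 2 sphereMeasure) :
    MemLp (Function.uncurry (invLap f)) 2 sphereMeasure :=
  (memLp_congr_ae (uncurry_invLap_ae_eq hf)).mpr (Lp.memLp _)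

lemma toLp_invLap (hf : MemLp (Function.uncurry f) 2 sphereMeasure) :
    (memLp_invLap hf).toLp _ = invLapLp (hf.toLp _) :=
  Lp.ext ((memLp_invLap hf).coeFn_toLp.trans (uncurry_invLap_ae_eq hf))

lemma two_thirds_le_one_add_two_mul_invLapEigenvalue {n : ℕ} (hn : 2 ≤ n) :
    2 / 3 ≤ 1 + 2 * invLapEigenvalue n := by
  have hn' : (2 : ℝ) ≤ n := by exact_mod_cast hn
  have hev : 1 / ((n : ℝ) * (n + 1)) ≤ 1 / (2 * (2 + 1)) := by gcongr
  rw [invLapEigenvalue, neg_div]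
  linarith

lemma mul_norm_le_norm_add_two_smul_invLapLp {F : Lp ℝ 2 sphereMeasure}
    (hF : ∀ p : harmonicIndex, p.1.1 = 1 → inner ℝ (harmonicLp p) F = 0) :
    2 / 3 * ‖F‖ ≤ ‖F + (2 : ℝ) • invLapLp F‖ := by
  have hgap (p : harmonicIndex) (hp : inner ℝ (harmonicLp p) F ≠ 0) :
      2 / 3 ≤ ‖1 + 2 * invLapEigenvalue p.1.1‖ := by
    have hdegree : 1 ≤ p.1.1 := p.2.1
    have hdegree_ne : p.1.1 ≠ 1 := fun h => hp (hF p h)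
    exact (two_thirds_le_one_add_two_mul_invLapEigenvalue (by lia)).trans (Real.le_norm_self _)
  have hterm (p : harmonicIndex) :
      (2 : ℝ) • (invLapEigenvalue p.1.1 * inner ℝ (harmonicLp p) F) • harmonicLp p =
        (2 * invLapEigenvalue p.1.1 * inner ℝ (harmonicLp p) F) • harmonicLp p := by
    rw [smul_smul, mul_assoc]
  have hsum := (summable_norm_invLapLp F).of_norm.const_smul (2 : ℝ)
  rw [invLapLp, ← tsum_const_smul'']
  simp only [hterm] at hsum ⊢
  exact mul_norm_le_norm_add_tsum orthonormal_harmonicLp (by norm_num) (by norm_num) hgap hsum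

lemma l2Norm_le_l2Norm_add_two_mul_invLap (hf : MemLp (Function.uncurry f) 2 sphereMeasure)
    (horth : ∀ m : ℤ, |m| ≤ 1 → coeff f 1 m = 0) :
    2 / 3 * l2Norm f ≤ l2Norm fun θ φ => f θ φ + 2 * invLap f θ φ := by
  have hsum : MemLp (Function.uncurry fun θ φ => f θ φ + 2 * invLap f θ φ) 2 sphereMeasure :=
    hf.add ((memLp_invLap hf).const_mul 2)
  have htoLp : hsum.toLp _ = hf.toLp _ + (2 : ℝ) • invLapLp (hf.toLp _) := by
    rw [← toLp_invLap hf]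
    rfl
  rw [l2Norm_eq_norm_toLp hf, l2Norm_eq_norm_toLp hsum, htoLp]
  refine mul_norm_le_norm_add_two_smul_invLapLp fun p hp => ?_
  have horder : |p.1.2| ≤ (p.1.1 : ℤ) := p.2.2
  rw [hp, Nat.cast_one] at horder
  rw [inner_harmonicLp_toLp, hp, horth _ horder]

end InverseLaplacian

theorem coercivity_rigid_rotation_general {c : ℝ} (hc : c ≠ 0) {ω : SphereFun}
    (hω : ContDiffPhi ω) (horth1 : coeff ω 1 1 = 0) (horth2 : coeff ω 1 (-1) = 0) :
    l2Norm (dPhi ω) ≤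
      3 / (2 * |c|) * l2Norm (fun θ φ => c * (dPhi ω θ φ + 2 * invLap (dPhi ω) θ φ)) := by
  have horth (m : ℤ) (hm : |m| ≤ 1) : coeff (dPhi ω) 1 m = 0 := by
    rw [coeff_dPhi hω]
    obtain rfl | rfl | rfl : m = -1 ∨ m = 0 ∨ m = 1 := by grind
    · rw [neg_neg, horth1, mul_zero]
    · rw [Int.cast_zero, zero_mul]
    · rw [horth2, mul_zero]
  have hc' : |c| ≠ 0 := abs_ne_zero.mpr hc
  have hcoercive := l2Norm_le_l2Norm_add_two_mul_invLap
    (memLp_sphereMeasure_of_continuous hω.continuous_dPhi 2) horth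
  calc l2Norm (dPhi ω)
      ≤ 3 / 2 * l2Norm (fun θ φ => dPhi ω θ φ + 2 * invLap (dPhi ω) θ φ) := by linarith
    _ = 3 / (2 * |c|) * l2Norm (fun θ φ => c * (dPhi ω θ φ + 2 * invLap (dPhi ω) θ φ)) := by
      rw [l2Norm_const_mul]
      field_simp

/-- Coercivity of the linearization `Lω = aα(1 + 2Δ⁻¹)∂_φω`
of the non-rotating Euler equations around the rigid rotation `αY₁⁰`, on the
orthogonal complement of `span{Y₁¹, Y₁⁻¹}`:
`‖∂_φω‖_{L²} ≤ (3/(2a|α|))‖Lω‖_{L²}`. -/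
theorem coercivity_rigid_rotation (a α : ℝ)
    (ha : a = (1/2) * Real.sqrt (3/Real.pi)) (hα : α ≠ 0)
    (ω : SphereFun) (hsm : SphSmooth ω) (hper : PeriodicPhi ω)
    (hH1 : sobNormSq 1 ω < ⊤)
    (hmean : coeff ω 0 0 = 0)
    (horth1 : coeff ω 1 1 = 0) (horth2 : coeff ω 1 (-1) = 0) :
    l2Norm (dPhi ω)
      ≤ (3/(2*a*|α|)) * l2Norm (fun θ φ =>
          a*α * (dPhi ω θ φ + 2 * invLap (dPhi ω) θ φ)) := by
  have hapos : 0 < a := by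
    rw [ha]
    positivity
  simpa only [abs_mul, abs_of_pos hapos, mul_assoc] using
    coercivity_rigid_rotation_general (mul_ne_zero hapos.ne' hα)
      (.of_contDiff (hsm.of_le (by simp)) hper) horth1 horth2
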